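/- For all integers ρ ≥ 4, τ ≥ 0 and n ≥ 0 the following holds. Let G be a graph such that for every vertex v, the subgraph induced on the ball of radius ρ around v has chromatic number at most τ. Let X, Z ⊆ V(G) be disjoint sets such that every vertex of Z has a neighbour in X, and the subgraph induced on Z has chromatic number greater than nτ. Then there exist vertices x_1, ..., x_n ∈ X that pairwise have distance at least ρ in G, and such that for all distinct i, j ∈ {1, ..., n} there is a path in G between x_i and x_j with all internal vertices in Z, in which no vertex of {x_1, ..., x_n} \ {x_i, x_j} has a neighbour. -/

import Mathlib

/-!
Suppose no `n` vertices of `X` do the job. Any finite `R ⊆ Z` then has a proper colouring with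
colours `Fin n × Fin τ` that, near the members of a prescribed scattered family `x`, is forced:
every neighbour of `x i` in `R` gets the colour `(i, c (x i) ·)`, with `c v` a fixed `τ`-colouring
of the ball around `v`. By compactness `χ(Z) ≤ nτ`.

The proof is by induction on `R`. Extend `x` greedily, always by vertices with a neighbour in `R`.
If the balls around the extended family cover `R` before it has `n` members, colour each vertex
according to a ball containing it. Otherwise some `x i` and `x j` are not linked in `R`.
Let `U` be the set of neighbours of the other members and let `P` be the part of `R` that walks
from `x i` can reach in `R \ U`. Neighbours of `x j` lie outside `U ∪ P`, those of `x i` lie in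
`P \ U`, so both `R ∩ (U ∪ P)` and `R ∩ (U ∪ Pᶜ)` are smaller than `R`. Their colourings agree
on the overlap, which lies in `U`, where colours are forced, so they glue.
-/

section

open Set

variable {V ι κ : Type*} {G : SimpleGraph V}

-- If `y` and `z` lie in another component than `x`, both distances are `0`.
theorem dist_le_dist_add_one_of_adj {y z : V} (x : V) (hyz : G.Adj y z) :
    G.dist x z ≤ G.dist x y + 1 :=
  (hyz.reachable.dist_triangle_right x).trans_eq (by rw [SimpleGraph.dist_eq_one_iff_adj.2 hyz])

theorem not_adj_of_two_le_dist {x y : V} (h : 2 ≤ G.dist x y) : ¬ G.Adj x y := by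
  intro hxy
  have := SimpleGraph.dist_eq_one_iff_adj.2 hxy
  lia

theorem not_adj_of_adj_of_three_le_dist {x y z : V} (h : 3 ≤ G.dist x y) (hxz : G.Adj x z) :
    ¬ G.Adj y z := by
  intro hyz
  have : G.dist x y ≤ 2 := G.dist_le (.cons hxz hyz.symm.toWalk)
  lia

/-- `f` restricts to a proper colouring of the subgraph of `G` induced on `R`. Its values outside
`R` are irrelevant: colourings are total functions so that they can be glued. -/
def IsProperOn (G : SimpleGraph V) (R : Set V) (f : V → κ) : Prop :=
  ∀ ⦃u⦄, u ∈ R → ∀ ⦃w⦄, w ∈ R → G.Adj u w → f u ≠ f w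

theorem IsProperOn.mono {A B : Set V} {f : V → κ} (hf : IsProperOn G B f) (hAB : A ⊆ B) :
    IsProperOn G A f :=
  fun _ hu _ hw => hf (hAB hu) (hAB hw)

theorem exists_isProperOn_of_coloring [Nonempty κ] {R : Set V} (C : (G.induce R).Coloring κ) :
    ∃ f : V → κ, IsProperOn G R f := by
  refine ⟨Function.extend Subtype.val C fun _ => Classical.arbitrary _, fun u hu w hw huw => ?_⟩
  have extend_eq (v : R) :
      Function.extend Subtype.val C (fun _ => Classical.arbitrary _) (v : V) = C v :=
    Subtype.val_injective.extend_apply C _ v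
  rw [extend_eq ⟨u, hu⟩, extend_eq ⟨w, hw⟩]
  exact C.valid huw

theorem eqOn_piecewise_right {A B : Set V} [∀ z, Decidable (z ∈ A)] {f g : V → κ}
    (hfg : EqOn f g (A ∩ B)) : EqOn (A.piecewise f g) g B := by
  intro z hz
  by_cases hzA : z ∈ A
  · rw [piecewise_eq_of_mem _ _ _ hzA, hfg ⟨hzA, hz⟩]
  · rw [piecewise_eq_of_notMem _ _ _ hzA]

theorem IsProperOn.piecewise {A B : Set V} [∀ z, Decidable (z ∈ A)] {f g : V → κ}
    (hf : IsProperOn G A f) (hg : IsProperOn G B g) (hfg : EqOn f g (A ∩ B))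
    (hAB : ∀ u ∈ A \ B, ∀ w ∈ B \ A, ¬ G.Adj u w) : IsProperOn G (A ∪ B) (A.piecewise f g) := by
  have eq_left : EqOn (A.piecewise f g) f A := piecewise_eqOn A f g
  have eq_right : EqOn (A.piecewise f g) g B := eqOn_piecewise_right hfg
  intro u hu w hw huw
  by_cases hA : u ∈ A ∧ w ∈ A
  · rw [eq_left hA.1, eq_left hA.2]
    exact hf hA.1 hA.2 huw
  by_cases hB : u ∈ B ∧ w ∈ B
  · rw [eq_right hB.1, eq_right hB.2]
    exact hg hB.1 hB.2 huw
  obtain ⟨huAB, hwBA⟩ | ⟨huBA, hwAB⟩ : u ∈ A \ B ∧ w ∈ B \ A ∨ u ∈ B \ A ∧ w ∈ A \ B := by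
    grind
  · exact (hAB u huAB w hwBA huw).elim
  · exact (hAB w hwAB u huBA huw.symm).elim

/-- A form of the de Bruijn–Erdős theorem. -/
theorem nonempty_coloring_induce_of_forall_finite [Finite κ] {Z : Set V}
    (h : ∀ R ⊆ Z, R.Finite → ∃ f : V → κ, IsProperOn G R f) :
    Nonempty ((G.induce Z).Coloring κ) := by
  apply SimpleGraph.nonempty_hom_of_forall_finite_subgraph_hom
  intro H hH
  choose f hf using h (Subtype.val '' H.verts) (Subtype.coe_image_subset _ _) (hH.image _)
  exact ⟨fun v => f v, fun {u w} huw =>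
    hf (mem_image_of_mem _ u.2) (mem_image_of_mem _ w.2) (H.adj_sub huw)⟩

/-- The part of the family `x` indexed by `S` consists of vertices of `X` at pairwise distance at
least `ρ`. Members with index outside `S` are ignored, so this is a partial family that may still be
extended. -/
structure IsScattered (G : SimpleGraph V) (ρ : ℕ) (X : Set V) (S : Set ι) (x : ι → V) : Prop where
  mapsTo : MapsTo x S X
  pairwise : S.Pairwise fun i j => ρ ≤ G.dist (x i) (x j)

variable {ρ : ℕ} {X R : Set V} {S T : Set ι} {x y : ι → V}

theorem IsScattered.mono {Y : Set V} (h : IsScattered G ρ X T x) (hST : S ⊆ T)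
    (hS : MapsTo x S Y) : IsScattered G ρ Y S x :=
  ⟨hS, h.pairwise.mono hST⟩

theorem IsScattered.insert_update [DecidableEq ι] (h : IsScattered G ρ X S x) {a : ι} (ha : a ∉ S)
    {v : V} (hv : v ∈ X) (hfar : ∀ i ∈ S, ρ ≤ G.dist (x i) v) :
    IsScattered G ρ X (insert a S) (Function.update x a v) := by
  have update_eq {i : ι} (hi : i ∈ S) : Function.update x a v i = x i :=
    Function.update_of_ne (ne_of_mem_of_not_mem hi ha) _ _
  constructor
  · rintro i (rfl | hi)
    · rwa [Function.update_self]
    · rw [update_eq hi]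
      exact h.mapsTo hi
  · refine (pairwise_insert_of_notMem ha).2 ⟨fun i hi j hj hij => ?_, fun i hi => ?_⟩
    · beta_reduce
      rw [update_eq hi, update_eq hj]
      exact h.pairwise hi hj hij
    · rw [update_eq hi, Function.update_self]
      exact ⟨G.dist_comm ▸ hfar i hi, hfar i hi⟩

theorem IsScattered.exists_extension [Finite ι] (h : IsScattered G ρ X S x)
    (hcov : ∀ z ∈ R, ∃ v ∈ X, G.Adj z v) :
    ∃ T, ∃ y : ι → V, S ⊆ T ∧ EqOn y x S ∧ IsScattered G ρ X T y ∧
      (T = univ ∨ ∀ z ∈ R, ∃ i ∈ T, G.dist (y i) z ≤ ρ) := by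
  classical
  induction S using WellFoundedGT.induction generalizing x with | _ S ih
  by_cases hS : S = univ
  · exact ⟨S, x, Subset.rfl, eqOn_refl x S, h, .inl hS⟩
  by_cases! hballs : ∀ z ∈ R, ∃ i ∈ S, G.dist (x i) z ≤ ρ
  · exact ⟨S, x, Subset.rfl, eqOn_refl x S, h, .inr hballs⟩
  obtain ⟨z, hz, hzfar⟩ := hballs
  obtain ⟨v, hv, hzv⟩ := hcov z hz
  have hvfar (i : ι) (hi : i ∈ S) : ρ ≤ G.dist (x i) v :=
    Nat.le_of_lt_succ ((hzfar i hi).trans_le (dist_le_dist_add_one_of_adj (x i) hzv.symm))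
  obtain ⟨a, ha⟩ := (ne_univ_iff_exists_notMem S).1 hS
  obtain ⟨T, y, hT, hyx, hy, hTy⟩ := ih _ (ssubset_insert ha) (h.insert_update ha hv hvfar)
  refine ⟨T, y, (subset_insert a S).trans hT, fun i hi => ?_, hy, hTy⟩
  rw [hyx (mem_insert_of_mem a hi), Function.update_of_ne (ne_of_mem_of_not_mem hi ha)]

/-- A proper colouring of `G[R]` in which the neighbours in `R` of each member `x i` of a partial
family (`i ∈ S`) are forced to follow the colouring `c (x i)` attached to that member, tagged by
`i`. -/
structure IsAnchoredColoring (G : SimpleGraph V) (c : V → V → κ) (R : Set V) (S : Set ι)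
    (x : ι → V) (f : V → ι × κ) : Prop where
  isProperOn : IsProperOn G R f
  eq_of_adj : ∀ i ∈ S, ∀ z ∈ R, G.Adj (x i) z → f z = (i, c (x i) z)

variable {c : V → V → κ}

theorem IsAnchoredColoring.restrict {f : V → ι × κ} (hf : IsAnchoredColoring G c R T y f)
    (h : ∀ i ∈ S, ∀ z ∈ R, G.Adj (x i) z → i ∈ T ∧ y i = x i) :
    IsAnchoredColoring G c R S x f where
  isProperOn := hf.isProperOn
  eq_of_adj i hi z hz hiz := by
    obtain ⟨hiT, hyx⟩ := h i hi z hz hiz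
    rw [← hyx] at hiz ⊢
    exact hf.eq_of_adj i hiT z hz hiz

theorem IsAnchoredColoring.piecewise {A B : Set V} [∀ z, Decidable (z ∈ A)] {f g : V → ι × κ}
    (hf : IsAnchoredColoring G c A S x f) (hg : IsAnchoredColoring G c B S x g)
    (hforced : ∀ z ∈ A ∩ B, ∃ i ∈ S, G.Adj (x i) z)
    (hAB : ∀ u ∈ A \ B, ∀ w ∈ B \ A, ¬ G.Adj u w) :
    IsAnchoredColoring G c (A ∪ B) S x (A.piecewise f g) := by
  have hfg : EqOn f g (A ∩ B) := by
    intro z hz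
    obtain ⟨i, hi, hiz⟩ := hforced z hz
    rw [hf.eq_of_adj i hi z hz.1 hiz, hg.eq_of_adj i hi z hz.2 hiz]
  refine ⟨hf.isProperOn.piecewise hg.isProperOn hfg hAB, ?_⟩
  rintro i hi z (hz | hz) hiz
  · rw [piecewise_eqOn A f g hz, hf.eq_of_adj i hi z hz hiz]
  · rw [eqOn_piecewise_right hfg hz, hg.eq_of_adj i hi z hz hiz]

theorem exists_isAnchoredColoring_of_forall_dist_le [Nonempty ι] (hρ : 3 ≤ ρ)
    (hx : IsScattered G ρ X S x)
    (hc : ∀ v ∈ X, IsProperOn G {z ∈ R | G.dist v z ≤ ρ} (c v))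
    (hballs : ∀ z ∈ R, ∃ i ∈ S, G.dist (x i) z ≤ ρ) :
    ∃ f, IsAnchoredColoring G c R S x f := by
  have exists_center (z : V) (hz : z ∈ R) :
      ∃ i ∈ S, G.dist (x i) z ≤ ρ ∧ ∀ j ∈ S, G.Adj (x j) z → j = i := by
    by_cases! hadj : ∃ i ∈ S, G.Adj (x i) z
    · obtain ⟨i, hi, hiz⟩ := hadj
      refine ⟨i, hi, by rw [SimpleGraph.dist_eq_one_iff_adj.2 hiz]; lia, fun j hj hjz => ?_⟩
      by_contra hji
      exact not_adj_of_adj_of_three_le_dist (hρ.trans (hx.pairwise hj hi hji)) hjz hiz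
    · obtain ⟨i, hi, hiz⟩ := hballs z hz
      exact ⟨i, hi, hiz, fun j hj hjz => (hadj j hj hjz).elim⟩
  choose! center hcenter hdist huniq using exists_center
  refine ⟨fun z => (center z, c (x (center z)) z), fun u hu w hw huw heq => ?_,
    fun i hi z hz hiz => ?_⟩
  · obtain ⟨hcenters, hcolors⟩ := Prod.mk.inj heq
    rw [← hcenters] at hcolors
    exact hc _ (hx.mapsTo (hcenter u hu)) ⟨hu, hdist u hu⟩ ⟨hw, hcenters ▸ hdist w hw⟩ huw hcolors
  · rw [← huniq z hz i hi hiz]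

/-- Some path of `G` joins `x i` to `x j`, has its interior in `A`, and contains no neighbour of any
other member of the family `x`. -/
def IsLinked (G : SimpleGraph V) (A : Set V) (x : ι → V) (i j : ι) : Prop :=
  ∃ p : G.Walk (x i) (x j), p.IsPath ∧
    (∀ v ∈ p.support, v ≠ x i → v ≠ x j → v ∈ A) ∧
    (∀ k, k ≠ i → k ≠ j → ∀ v ∈ p.support, ¬ G.Adj (x k) v)

theorem IsLinked.mono {A B : Set V} {i j : ι} (hAB : A ⊆ B) :
    IsLinked G A x i j → IsLinked G B x i j :=
  fun ⟨p, hp, hA, hother⟩ => ⟨p, hp, fun v hv hvi hvj => hAB (hA v hv hvi hvj), hother⟩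

/-- The vertices that a path linking `x i` to `x j` has to avoid. -/
def otherNeighbors (G : SimpleGraph V) (x : ι → V) (i j : ι) : Set V :=
  {z | ∃ k, k ≠ i ∧ k ≠ j ∧ G.Adj (x k) z}

/-- The vertices that can be reached from `u` by a walk that stays in `A` after leaving `u`; the
start `u` itself need not lie in `A`. -/
def reachableThrough (G : SimpleGraph V) (A : Set V) (u : V) : Set V :=
  {v | ∃ p : G.Walk u v, ∀ w ∈ p.support, w = u ∨ w ∈ A}

theorem self_mem_reachableThrough (A : Set V) (u : V) : u ∈ reachableThrough G A u :=
  ⟨.nil, by simp⟩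

theorem mem_reachableThrough_of_adj {A : Set V} {u v w : V} (hv : v ∈ reachableThrough G A u)
    (hvw : G.Adj v w) (hw : w ∈ A) : w ∈ reachableThrough G A u := by
  obtain ⟨p, hp⟩ := hv
  refine ⟨p.concat hvw, fun s hs => ?_⟩
  rw [SimpleGraph.Walk.support_concat, List.mem_append, List.mem_singleton] at hs
  rcases hs with hs | rfl
  · exact hp s hs
  · exact .inr hw

theorem isLinked_of_mem_reachableThrough (hx : Pairwise fun i j => 2 ≤ G.dist (x i) (x j))
    {i j : ι} {z : V} (hz : z ∈ reachableThrough G (R \ otherNeighbors G x i j) (x i))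
    (hzj : G.Adj z (x j)) : IsLinked G R x i j := by
  classical
  obtain ⟨p, hp⟩ := hz
  have support_subset (v : V) (hv : v ∈ (p.concat hzj).bypass.support) :
      v = x i ∨ v = x j ∨ v ∈ R \ otherNeighbors G x i j := by
    replace hv := SimpleGraph.Walk.support_bypass_subset_support _ hv
    rw [SimpleGraph.Walk.support_concat, List.mem_append, List.mem_singleton] at hv
    rcases hv with hv | hv
    · exact (hp v hv).imp_right .inr
    · exact .inr (.inl hv)
  refine ⟨_, (p.concat hzj).bypass_isPath, fun v hv hvi hvj => ?_, fun k hki hkj v hv hkv => ?_⟩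
  · exact (((support_subset v hv).resolve_left hvi).resolve_left hvj).1
  · rcases support_subset v hv with rfl | rfl | hvR
    · exact not_adj_of_two_le_dist (hx hki) hkv
    · exact not_adj_of_two_le_dist (hx hkj) hkv
    · exact hvR.2 ⟨k, hki, hkj, hkv⟩

theorem exists_isAnchoredColoring_of_not_isLinked
    (hx : Pairwise fun i j => 3 ≤ G.dist (x i) (x j)) {i j : ι} (hij : ¬ IsLinked G R x i j)
    (hi : ∃ z ∈ R, G.Adj (x i) z) (hj : ∃ z ∈ R, G.Adj (x j) z)
    (ih : ∀ A ⊂ R, ∃ f, IsAnchoredColoring G c A univ x f) :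
    ∃ f, IsAnchoredColoring G c R univ x f := by
  classical
  let U := otherNeighbors G x i j
  let P := reachableThrough G (R \ U) (x i)
  have hiU {z : V} (hiz : G.Adj (x i) z) : z ∉ U := fun ⟨k, hki, _, hkz⟩ =>
    not_adj_of_adj_of_three_le_dist (hx hki) hkz hiz
  have hjU {z : V} (hjz : G.Adj (x j) z) : z ∉ U := fun ⟨k, _, hkj, hkz⟩ =>
    not_adj_of_adj_of_three_le_dist (hx hkj) hkz hjz
  have hjP {z : V} (hjz : G.Adj (x j) z) : z ∉ P := fun hz =>
    hij (isLinked_of_mem_reachableThrough (fun _ _ h => (Nat.le_succ 2).trans (hx h)) hz hjz.symm)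
  have hUP : R ∩ (U ∪ P) ⊂ R := by
    obtain ⟨z, hz, hjz⟩ := hj
    exact inter_ssubset_left_iff.2 fun h => (h hz).elim (hjU hjz) (hjP hjz)
  have hUPc : R ∩ (U ∪ Pᶜ) ⊂ R := by
    obtain ⟨z, hz, hiz⟩ := hi
    have hzP : z ∈ P :=
      mem_reachableThrough_of_adj (self_mem_reachableThrough _ _) hiz ⟨hz, hiU hiz⟩
    exact inter_ssubset_left_iff.2 fun h => (h hz).elim (hiU hiz) (· hzP)
  obtain ⟨f, hf⟩ := ih _ hUP
  obtain ⟨g, hg⟩ := ih _ hUPc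
  have hunion : R ∩ (U ∪ P) ∪ R ∩ (U ∪ Pᶜ) = R := by
    rw [← inter_union_distrib_left, union_union_union_comm, union_compl_self, union_univ,
      inter_univ]
  refine hunion ▸ ⟨_, hf.piecewise hg ?_ ?_⟩
  · rintro z ⟨⟨_, hz⟩, _, hz'⟩
    obtain ⟨k, -, -, hkz⟩ : z ∈ U := hz.elim id fun hzP => hz'.resolve_right (· hzP)
    exact ⟨k, mem_univ k, hkz⟩
  · rintro u ⟨⟨huR, -⟩, hu'⟩ w ⟨⟨hwR, -⟩, hw'⟩ huw
    have huP : u ∈ P := by_contra fun h => hu' ⟨huR, .inr h⟩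
    have hwU : w ∉ U := fun h => hw' ⟨hwR, .inl h⟩
    exact hw' ⟨hwR, .inr (mem_reachableThrough_of_adj huP huw ⟨hwR, hwU⟩)⟩

theorem exists_isAnchoredColoring [Finite ι] (hρ : 3 ≤ ρ) {Z : Set V}
    (hc : ∀ v ∈ X, IsProperOn G {z ∈ Z | G.dist v z ≤ ρ} (c v))
    (hcov : ∀ z ∈ Z, ∃ v ∈ X, G.Adj z v)
    (hunlinked : ∀ y : ι → V, IsScattered G ρ X univ y → ∃ i j, ¬ IsLinked G Z y i j)
    (hRZ : R ⊆ Z) (hR : R.Finite) (hx : IsScattered G ρ X S x) :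
    ∃ f, IsAnchoredColoring G c R S x f := by
  induction hn : R.ncard using Nat.strong_induction_on generalizing R S x with | _ n ih
  let X' := {v ∈ X | ∃ z ∈ R, G.Adj v z}
  let S' := {i ∈ S | ∃ z ∈ R, G.Adj (x i) z}
  have hx' : IsScattered G ρ X' S' x :=
    hx.mono (sep_subset S _) fun i hi => ⟨hx.mapsTo hi.1, hi.2⟩
  have hcov' (z : V) (hz : z ∈ R) : ∃ v ∈ X', G.Adj z v := by
    obtain ⟨v, hv, hzv⟩ := hcov z (hRZ hz)
    exact ⟨v, ⟨hv, z, hz, hzv.symm⟩, hzv⟩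
  obtain ⟨T, y, hS'T, hyx, hy', hT⟩ := hx'.exists_extension hcov'
  have hy : IsScattered G ρ X T y := hy'.mono Subset.rfl fun i hi => (hy'.mapsTo hi).1
  suffices ∃ f, IsAnchoredColoring G c R T y f by
    obtain ⟨f, hf⟩ := this
    refine ⟨f, hf.restrict fun i hi z hz hiz => ?_⟩
    have hiS' : i ∈ S' := ⟨hi, z, hz, hiz⟩
    exact ⟨hS'T hiS', hyx hiS'⟩
  by_cases hTuniv : T = univ
  · subst hTuniv
    obtain ⟨i, j, hij⟩ := hunlinked y hy
    exact exists_isAnchoredColoring_of_not_isLinked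
      (fun k l hkl => hρ.trans (hy.pairwise (mem_univ k) (mem_univ l) hkl))
      (mt (IsLinked.mono hRZ) hij) (hy'.mapsTo (mem_univ i)).2 (hy'.mapsTo (mem_univ j)).2
      fun A hA => ih _ (hn ▸ ncard_lt_ncard hA hR) (hA.subset.trans hRZ)
        (hR.subset hA.subset) hy rfl
  · have : Nonempty ι := ((ne_univ_iff_exists_notMem T).1 hTuniv).nonempty
    exact exists_isAnchoredColoring_of_forall_dist_le hρ hy
      (fun v hv => (hc v hv).mono fun z hz => ⟨hRZ hz.1, hz.2⟩) (hT.resolve_left hTuniv)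

end

open Set in
theorem stmt_2_general {V : Type*} {ρ τ n : ℕ} (hρ : 3 ≤ ρ) (G : SimpleGraph V) (X Z : Set V)
    (hball : ∀ v ∈ X, (G.induce {u ∈ Z | G.dist v u ≤ ρ}).chromaticNumber ≤ (τ : ℕ∞))
    (hcov : ∀ z ∈ Z, ∃ x ∈ X, G.Adj z x)
    (hchi : (n * τ : ℕ) < (G.induce Z).chromaticNumber) :
    ∃ x : Fin n → V, (∀ i, x i ∈ X) ∧ (∀ i j, i ≠ j → ρ ≤ G.dist (x i) (x j)) ∧
      ∀ i j, i ≠ j → IsLinked G Z x i j := by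
  contrapose! hchi
  rw [SimpleGraph.chromaticNumber_le_iff_colorable]
  rcases Z.eq_empty_or_nonempty with rfl | ⟨z, hz⟩
  · exact .of_isEmpty _
  obtain ⟨v, hv, hzv⟩ := hcov z hz
  have : Nonempty (Fin τ) := by
    obtain ⟨C⟩ := SimpleGraph.chromaticNumber_le_iff_colorable.1 (hball v hv)
    have hvz : G.dist v z ≤ ρ := by
      rw [SimpleGraph.dist_eq_one_iff_adj.2 hzv.symm]
      lia
    exact ⟨C ⟨z, hz, hvz⟩⟩
  have exists_ball_coloring (v : V) (hv : v ∈ X) :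
      ∃ f : V → Fin τ, IsProperOn G {u ∈ Z | G.dist v u ≤ ρ} f := by
    obtain ⟨C⟩ := SimpleGraph.chromaticNumber_le_iff_colorable.1 (hball v hv)
    exact exists_isProperOn_of_coloring C
  choose! c hc using exists_ball_coloring
  have hunlinked (y : Fin n → V) (hy : IsScattered G ρ X univ y) : ∃ i j, ¬ IsLinked G Z y i j := by
    obtain ⟨i, j, -, hij⟩ := hchi y (fun i => hy.mapsTo (mem_univ i))
      fun i j => hy.pairwise (mem_univ i) (mem_univ j)
    exact ⟨i, j, hij⟩
  obtain ⟨C⟩ := nonempty_coloring_induce_of_forall_finite (κ := Fin n × Fin τ) fun R hRZ hR => by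
    obtain ⟨f, hf⟩ := exists_isAnchoredColoring hρ hc hcov hunlinked hRZ hR (S := ∅)
      (x := fun _ => z) ⟨mapsTo_empty _ _, pairwise_empty _⟩
    exact ⟨f, hf.isProperOn⟩
  simpa using C.colorable

/-- Theorem 8.1, internalroute: if `χ^ρ(G) ≤ τ` (ρ ≥ 4), `X` covers `Z`, and
`χ(Z) > nτ`, then there are `x 1, …, x n ∈ X`, pairwise at distance at least `ρ`, such that
every two of them are joined by a path with interior in `Z` containing no neighbour of any
other `x k`. -/
theorem stmt_2 {V : Type} (ρ τ n : ℕ) (hρ : 4 ≤ ρ)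
    (G : SimpleGraph V)
    (hball : ∀ v : V, (G.induce {u | G.dist v u ≤ ρ}).chromaticNumber ≤ (τ : ℕ∞))
    (X Z : Set V) (hdisj : Disjoint X Z)
    (hcov : ∀ z ∈ Z, ∃ x ∈ X, G.Adj z x)
    (hchi : (n * τ : ℕ) < (G.induce Z).chromaticNumber) :
    ∃ x : Fin n → V, (∀ i, x i ∈ X) ∧
      (∀ i j, i ≠ j → ρ ≤ G.dist (x i) (x j)) ∧
      (∀ i j, i ≠ j → ∃ p : G.Walk (x i) (x j), p.IsPath ∧
        (∀ v ∈ p.support, v ≠ x i → v ≠ x j → v ∈ Z) ∧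
        (∀ k, k ≠ i → k ≠ j → ∀ v ∈ p.support, ¬ G.Adj (x k) v)) :=
  stmt_2_general ((Nat.le_succ 3).trans hρ) G X Z
    (fun v _ => (SimpleGraph.chromaticNumber_mono_of_hom
      (G.induceHomOfLE fun _ hu => hu.2).toHom).trans (hball v)) hcov hchi
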